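/- arXiv:1006.1196 — 5 statements merged into one kernel-verified Lean document; each statement's English description precedes it below -/
import Mathlib

section
/- Let (x, y, z, w) be a primitive solution of x^4 + 2y^4 = z^4 + 4w^4. Then 5 divides y, and exactly one of the following two cases occurs: either 5 divides w, 5 does not divide x and 5 does not divide z; or 5 divides x, 5 does not divide z and 5 does not divide w. -/
theorem fourth_mod_five (n : ℤ) :
    ((5 : ℤ) ∣ n ∧ n ^ 4 % 5 = 0) ∨ (¬ (5 : ℤ) ∣ n ∧ n ^ 4 % 5 = 1) := by
  have h : n % 5 = 0 ∨ n % 5 = 1 ∨ n % 5 = 2 ∨ n % 5 = 3 ∨ n % 5 = 4 := by omega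
  rcases h with h | h | h | h | h
  · left
    exact ⟨by omega, by simp [pow_succ, Int.mul_emod, h]⟩
  all_goals
    right
    exact ⟨by omega, by simp [pow_succ, Int.mul_emod, h]⟩

/-- For a primitive solution `(x, y, z, w)` of `x^4 + 2y^4 = z^4 + 4w^4`, `5` divides `y` and
exactly one of the two cases occurs: either `5 ∣ w`, `5 ∤ x`, `5 ∤ z` (case N), or
`5 ∣ x`, `5 ∤ z`, `5 ∤ w` (case S). -/
theorem stmt_2 (x y z w : ℤ)
    (heq : x ^ 4 + 2 * y ^ 4 = z ^ 4 + 4 * w ^ 4)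
    (hprim : Int.gcd (Int.gcd (Int.gcd x y) z) w = 1) :
    (5 : ℤ) ∣ y ∧
      Xor' ((5 : ℤ) ∣ w ∧ ¬ (5 : ℤ) ∣ x ∧ ¬ (5 : ℤ) ∣ z)
        ((5 : ℤ) ∣ x ∧ ¬ (5 : ℤ) ∣ z ∧ ¬ (5 : ℤ) ∣ w) := by
  have hall : ¬ ((5 : ℤ) ∣ x ∧ (5 : ℤ) ∣ y ∧ (5 : ℤ) ∣ z ∧ (5 : ℤ) ∣ w) := by
    rintro ⟨hx, hy, hz, hw⟩
    have h := Int.dvd_coe_gcd (Int.dvd_coe_gcd (Int.dvd_coe_gcd hx hy) hz) hw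
    rw [hprim] at h
    norm_num at h
  unfold Xor'
  rcases fourth_mod_five x with ⟨hx, hx4⟩ | ⟨hx, hx4⟩ <;>
  rcases fourth_mod_five y with ⟨hy, hy4⟩ | ⟨hy, hy4⟩ <;>
  rcases fourth_mod_five z with ⟨hz, hz4⟩ | ⟨hz, hz4⟩ <;>
  rcases fourth_mod_five w with ⟨hw, hw4⟩ | ⟨hw, hw4⟩ <;>
  first
    | (exfalso; omega)
    | (exfalso; exact hall ⟨hx, hy, hz, hw⟩)
    | tauto
end

section
/- Let (x, y, z, w) be a primitive solution of x^4 + 2y^4 = z^4 + 4w^4. Then x and z are odd while y and w are even. -/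
lemma fourth_mod (a : ℤ) : (a % 2 = 0 ∧ a ^ 4 % 16 = 0) ∨ (a % 2 = 1 ∧ a ^ 4 % 16 = 1) := by
  have h : a % 16 = 0 ∨ a % 16 = 1 ∨ a % 16 = 2 ∨ a % 16 = 3 ∨ a % 16 = 4 ∨ a % 16 = 5 ∨
      a % 16 = 6 ∨ a % 16 = 7 ∨ a % 16 = 8 ∨ a % 16 = 9 ∨ a % 16 = 10 ∨ a % 16 = 11 ∨
      a % 16 = 12 ∨ a % 16 = 13 ∨ a % 16 = 14 ∨ a % 16 = 15 := by omega
  have h2 : a % 2 = (a % 16) % 2 := by omega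
  rw [h2, (Int.mod_modEq a 16).symm.pow 4 |>.eq]
  rcases h with h | h | h | h | h | h | h | h | h | h | h | h | h | h | h | h <;> rw [h] <;> decide

/-- For a primitive solution `(x, y, z, w)` of `x^4 + 2y^4 = z^4 + 4w^4`,
`x` and `z` are odd while `y` and `w` are even. -/
theorem stmt_7 (x y z w : ℤ)
    (heq : x ^ 4 + 2 * y ^ 4 = z ^ 4 + 4 * w ^ 4)
    (hprim : Int.gcd (Int.gcd (Int.gcd x y) z) w = 1) :
    Odd x ∧ Odd z ∧ Even y ∧ Even w := by
  have hne : ¬ (x % 2 = 0 ∧ y % 2 = 0 ∧ z % 2 = 0 ∧ w % 2 = 0) := by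
    rintro ⟨hx, hy, hz, hw⟩
    have h := Int.dvd_coe_gcd (Int.dvd_coe_gcd (Int.dvd_coe_gcd (Int.dvd_of_emod_eq_zero hx)
      (Int.dvd_of_emod_eq_zero hy)) (Int.dvd_of_emod_eq_zero hz)) (Int.dvd_of_emod_eq_zero hw)
    rw [hprim] at h
    norm_num at h
  rw [Int.odd_iff, Int.odd_iff, Int.even_iff, Int.even_iff]
  have hx := fourth_mod x
  have hy := fourth_mod y
  have hz := fourth_mod z
  have hw := fourth_mod w
  generalize x ^ 4 = X at *
  generalize y ^ 4 = Y at *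
  generalize z ^ 4 = Z at *
  generalize w ^ 4 = W at *
  omega
end

section
/- Let k ≥ 4 be an integer and r an integer. There exist an odd integer z and an even integer w with z^4 + 4w^4 ≡ r (mod 2^k) if and only if r ≡ 1 (mod 16). Likewise, there exist an odd integer x and an even integer y with x^4 + 2y^4 ≡ r (mod 2^k) if and only if r ≡ 1 (mod 16). -/
theorem exists_fourth_root (r : ℤ) (hr : r ≡ 1 [ZMOD 16]) (k : ℕ) :
    ∃ c : ℤ, (2 : ℤ) ^ (k + 4) ∣ r - (2 * c + 1) ^ 4 := by
  induction k with
  | zero => exact ⟨0, by simpa using hr.symm.dvd⟩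
  | succ k ih =>
    obtain ⟨c, m, hm⟩ := ih
    refine ⟨c - 2 * 2 ^ k * (-m), ?_⟩
    have h : r = (2 * c + 1) ^ 4 + 2 ^ (k + 4) * m := by linarith
    rw [h]
    generalize hq : (2 : ℤ) ^ k = q
    have h1 : (2 : ℤ) ^ (k + 4) = 16 * q := by rw [pow_add, hq]; ring
    have h2 : (2 : ℤ) ^ (k + 1 + 4) = 32 * q := by rw [pow_add, pow_add, hq]; ring
    rw [h1, h2]
    refine ⟨-m * (4 * c ^ 3 + 6 * c ^ 2 + 3 * c) - 3 * q * (2 * c + 1) ^ 2 * m ^ 2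
      - 8 * q ^ 2 * (2 * c + 1) * m ^ 3 - 8 * q ^ 3 * m ^ 4, ?_⟩
    ring

theorem odd_pow_four (z : ℤ) (hz : Odd z) : z ^ 4 ≡ 1 [ZMOD 16] := by
  obtain ⟨c, rfl⟩ := hz
  apply Int.ModEq.symm
  rw [Int.modEq_iff_dvd]
  obtain ⟨d, hd⟩ := Int.even_mul_succ_self c
  have : (2 * c + 1) ^ 4 - 1 = 8 * (c * (c + 1)) * (2 * (c * (c + 1)) + 1) := by ring
  rw [this, hd]
  exact ⟨d * (2 * (d + d) + 1), by ring⟩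

theorem rep_iff (a : ℤ) (k : ℕ) (hk : 4 ≤ k) (r : ℤ) :
    (∃ z w : ℤ, Odd z ∧ Even w ∧ z ^ 4 + a * w ^ 4 ≡ r [ZMOD (2 ^ k : ℤ)]) ↔
      r ≡ 1 [ZMOD 16] := by
  constructor
  · rintro ⟨z, w, hz, ⟨v, rfl⟩, h⟩
    have h16 : (16 : ℤ) ∣ 2 ^ k := by
      have := pow_dvd_pow (2 : ℤ) hk
      norm_num at this
      exact this
    have h1 := (h.of_dvd h16).symm
    have h2 : a * (v + v) ^ 4 ≡ 0 [ZMOD 16] :=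
      (Int.modEq_zero_iff_dvd).2 ⟨a * v ^ 4, by ring⟩
    simpa using h1.trans ((odd_pow_four z hz).add h2)
  · intro hr
    obtain ⟨j, rfl⟩ := Nat.exists_eq_add_of_le' hk
    obtain ⟨c, hc⟩ := exists_fourth_root r hr j
    exact ⟨2 * c + 1, 0, ⟨c, rfl⟩, Even.zero, by
      rw [Int.modEq_iff_dvd]; simpa using hc⟩

/-- For `k ≥ 4`, a residue `r` is represented modulo `2^k` by `z^4 + 4w^4` with `z` odd and `w`
even iff `r ≡ 1 (mod 16)`; likewise for `x^4 + 2y^4` with `x` odd and `y` even. -/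
theorem stmt_9 (k : ℕ) (hk : 4 ≤ k) (r : ℤ) :
    ((∃ z w : ℤ, Odd z ∧ Even w ∧ z ^ 4 + 4 * w ^ 4 ≡ r [ZMOD (2 ^ k : ℤ)]) ↔
        r ≡ 1 [ZMOD 16]) ∧
      ((∃ x y : ℤ, Odd x ∧ Even y ∧ x ^ 4 + 2 * y ^ 4 ≡ r [ZMOD (2 ^ k : ℤ)]) ↔
        r ≡ 1 [ZMOD 16]) :=
  ⟨rep_iff 4 k hk r, rep_iff 2 k hk r⟩
end

section
/- Let q_1(a, b) = a^2 + b^2, q_2(a, b) = a^2 − 2b^2 and q_3(a, b) = a^2 + 2b^2. For each i ∈ {1, 2, 3} the following holds: if p is a prime number that is not represented by q_i (i.e., there are no integers a, b with q_i(a, b) = p), and a_0, b_0 are integers such that p divides q_i(a_0, b_0), then p divides a_0 and p divides b_0. -/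
theorem thue_aux (p : ℕ) (hp : p.Prime) (d a b : ℤ) (h : (p : ℤ) ∣ a ^ 2 - d * b ^ 2)
    (hb : ¬ (p : ℤ) ∣ b) :
    ∃ x y : ℤ, (x ≠ 0 ∨ y ≠ 0) ∧ x ^ 2 < p ∧ y ^ 2 < p ∧ (p : ℤ) ∣ x ^ 2 - d * y ^ 2 := by
  haveI : Fact p.Prime := ⟨hp⟩
  have hpp : Prime (p : ℤ) := Nat.prime_iff_prime_int.mp hp
  have hsq : ∀ x : ℤ, |x| ≤ (Nat.sqrt p : ℕ) → x ^ 2 < p := by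
    intro x hx
    have h1 : x ^ 2 ≤ p := by
      have h2 : ((Nat.sqrt p : ℕ) : ℤ) ^ 2 ≤ p := by exact_mod_cast Nat.sqrt_le' p
      have h3 := sq_abs x
      nlinarith [abs_nonneg x]
    refine lt_of_le_of_ne h1 fun h2 => ?_
    exact hpp.irreducible.not_isSquare ⟨x, by rw [← h2]; ring⟩
  obtain ⟨s, t, hst, he⟩ : ∃ s t : Fin (Nat.sqrt p + 1) × Fin (Nat.sqrt p + 1), s ≠ t ∧
      ((s.1.val : ZMod p) * b - s.2.val * a) = ((t.1.val : ZMod p) * b - t.2.val * a) := by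
    apply Fintype.exists_ne_map_eq_of_card_lt
      (fun s : Fin (Nat.sqrt p + 1) × Fin (Nat.sqrt p + 1) =>
        ((s.1.val : ZMod p) * b - s.2.val * a))
    rw [ZMod.card, Fintype.card_prod, Fintype.card_fin]
    exact Nat.lt_succ_sqrt p
  obtain ⟨⟨s1, hs1⟩, ⟨s2, hs2⟩⟩ := s
  obtain ⟨⟨t1, ht1⟩, ⟨t2, ht2⟩⟩ := t
  simp only at he
  refine ⟨(s1 : ℤ) - t1, (s2 : ℤ) - t2, ?_, hsq _ (by rw [abs_le]; omega),
    hsq _ (by rw [abs_le]; omega), ?_⟩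
  · by_contra! hc
    apply hst
    have e1 : s1 = t1 := by omega
    have e2 : s2 = t2 := by omega
    subst e1 e2
    rfl
  · have hd : (p : ℤ) ∣ ((s1 : ℤ) - t1) * b - ((s2 : ℤ) - t2) * a := by
      rw [← ZMod.intCast_zmod_eq_zero_iff_dvd]
      push_cast
      linear_combination he
    generalize (s1 : ℤ) - t1 = x at *
    generalize (s2 : ℤ) - t2 = y at *
    have h2 : (p : ℤ) ∣ b ^ 2 * (x ^ 2 - d * y ^ 2) := by
      have e : b ^ 2 * (x ^ 2 - d * y ^ 2) =
        (x * b - y * a) * (x * b + y * a) + (a ^ 2 - d * b ^ 2) * y ^ 2 := by ring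
      rw [e]
      exact dvd_add (hd.mul_right _) (h.mul_right _)
    rcases hpp.dvd_or_dvd h2 with h3 | h3
    · exact absurd (hpp.dvd_of_dvd_pow h3) hb
    · exact h3

theorem form_aux (p : ℕ) (hp : p.Prime) (d : ℤ)
    (H : ¬ ∃ x y : ℤ, (x ≠ 0 ∨ y ≠ 0) ∧ x ^ 2 < p ∧ y ^ 2 < p ∧ (p : ℤ) ∣ x ^ 2 - d * y ^ 2)
    (a b : ℤ) (h : (p : ℤ) ∣ a ^ 2 - d * b ^ 2) : (p : ℤ) ∣ a ∧ (p : ℤ) ∣ b := by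
  have hpp : Prime (p : ℤ) := Nat.prime_iff_prime_int.mp hp
  by_cases hb : (p : ℤ) ∣ b
  · refine ⟨hpp.dvd_of_dvd_pow (n := 2) ?_, hb⟩
    have := dvd_add h ((hb.mul_right b).mul_left d)
    have e : a ^ 2 - d * b ^ 2 + d * (b * b) = a ^ 2 := by ring
    rwa [e] at this
  · exact absurd (thue_aux p hp d a b h hb) H

/-- For each of the binary quadratic forms `q₁(a,b) = a² + b²`, `q₂(a,b) = a² - 2b²`,
`q₃(a,b) = a² + 2b²`: if a prime `p` is not represented by the form and `p` divides
the value of the form at `(a₀, b₀)`, then `p ∣ a₀` and `p ∣ b₀`. -/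
theorem stmt_10 (p : ℕ) (hp : p.Prime) :
    ((¬ ∃ a b : ℤ, a ^ 2 + b ^ 2 = p) →
        ∀ a₀ b₀ : ℤ, (p : ℤ) ∣ a₀ ^ 2 + b₀ ^ 2 → (p : ℤ) ∣ a₀ ∧ (p : ℤ) ∣ b₀) ∧
      ((¬ ∃ a b : ℤ, a ^ 2 - 2 * b ^ 2 = p) →
        ∀ a₀ b₀ : ℤ, (p : ℤ) ∣ a₀ ^ 2 - 2 * b₀ ^ 2 → (p : ℤ) ∣ a₀ ∧ (p : ℤ) ∣ b₀) ∧
      ((¬ ∃ a b : ℤ, a ^ 2 + 2 * b ^ 2 = p) →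
        ∀ a₀ b₀ : ℤ, (p : ℤ) ∣ a₀ ^ 2 + 2 * b₀ ^ 2 → (p : ℤ) ∣ a₀ ∧ (p : ℤ) ∣ b₀) := by
  have hp0 : (0 : ℤ) < p := by exact_mod_cast hp.pos
  refine ⟨fun H a b h => ?_, fun H a b h => ?_, fun H a b h => ?_⟩
  · refine form_aux p hp (-1) ?_ a b (by convert h using 1; ring)
    rintro ⟨x, y, hxy, hx, hy, k, hk⟩
    have hpos : 0 < x ^ 2 + y ^ 2 := by
      rcases hxy with h0 | h0 <;> positivity
    have k1 : 0 < k := by nlinarith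
    have k2 : k < 2 := by nlinarith
    obtain rfl : k = 1 := by omega
    exact H ⟨x, y, by linarith⟩
  · refine form_aux p hp 2 ?_ a b h
    rintro ⟨x, y, hxy, hx, hy, k, hk⟩
    have k1 : k < 1 := by nlinarith [sq_nonneg y]
    have k2 : -2 < k := by nlinarith [sq_nonneg x]
    have k3 : k ≠ 0 := by
      rintro rfl
      have e : x ^ 2 = 2 * y ^ 2 := by linarith
      have hy0 : y ≠ 0 := by
        rintro rfl
        simp_all
      have hy1 : (y : ℚ) ≠ 0 := by exact_mod_cast hy0
      have e' : (x : ℚ) ^ 2 = 2 * (y : ℚ) ^ 2 := by exact_mod_cast e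
      have hs : IsSquare ((2 : ℕ) : ℚ) := ⟨x / y, by field_simp; push_cast; linarith⟩
      rw [Rat.isSquare_natCast_iff] at hs
      exact Nat.prime_two.prime.irreducible.not_isSquare hs
    obtain rfl : k = -1 := by omega
    exact H ⟨x + 2 * y, x + y, by linarith⟩
  · refine form_aux p hp (-2) ?_ a b (by convert h using 1; ring)
    rintro ⟨x, y, hxy, hx, hy, k, hk⟩
    have hpos : 0 < x ^ 2 + 2 * y ^ 2 := by
      rcases hxy with h0 | h0 <;> positivity
    have k1 : 0 < k := by nlinarith
    have k2 : k < 3 := by nlinarith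
    obtain rfl | rfl : k = 1 ∨ k = 2 := by omega
    · exact H ⟨x, y, by linarith⟩
    · have h2 : (2 : ℤ) ∣ x ^ 2 := ⟨p - y ^ 2, by linarith⟩
      obtain ⟨z, rfl⟩ := Int.prime_two.dvd_of_dvd_pow h2
      exact H ⟨y, z, by linarith⟩
end

section
/- Let p be a prime number different from 2, 5, 13 and 17. Then each of the quartic forms f_N(x, z) = x^4 − z^4, g_N(y, w) = 4w^4 − 2y^4, f_S(z, w) = z^4 + 4w^4 and g_S(x, y) = x^4 + 2y^4 represents every residue class modulo p: for every integer r there exist integers giving the form a value congruent to r modulo p. -/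
/-- An element on which a character of order four takes the value `1` is a fourth power. -/
lemma fourth_of_char_one {F : Type*} [Field F] [Fintype F] (χ : MulChar F ℂ)
    (hχ : orderOf χ = 4) (u : F) (hu : χ u = 1) : ∃ x : F, u = x ^ 4 := by
  classical
  have hu0 : u ≠ 0 := by
    rintro rfl
    rw [MulChar.map_zero] at hu
    exact zero_ne_one hu
  obtain ⟨g, hg⟩ := IsCyclic.exists_generator (α := Fˣ)
  have hord : orderOf (χ (g : F)) = 4 := by
    rw [← hχ]
    apply orderOf_eq_orderOf_iff.mpr
    intro n
    rw [MulChar.eq_iff hg (χ ^ n) 1, MulChar.pow_apply_coe, MulChar.one_apply_coe]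
  obtain ⟨k, hk⟩ := (Submonoid.mem_powers_iff _ _).1
    (mem_powers_iff_mem_zpowers.2 (hg (Units.mk0 u hu0)))
  have hk' : u = (g : F) ^ k := by
    have := congrArg Units.val hk
    simpa using this.symm
  rw [hk', map_pow] at hu
  have hd := orderOf_dvd_of_pow_eq_one hu
  rw [hord] at hd
  obtain ⟨m, rfl⟩ := hd
  exact ⟨(g : F) ^ m, by rw [hk', mul_comm, pow_mul]⟩

/-- The sum of the powers of a quartic character detects fourth powers. -/
lemma fourth_of_sum_ne {F : Type*} [Field F] [Fintype F] (χ : MulChar F ℂ)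
    (hχ : orderOf χ = 4) (u : F) (hu : ∑ j ∈ Finset.range 4, (χ ^ j) u ≠ 0) :
    ∃ x : F, u = x ^ 4 := by
  apply fourth_of_char_one χ hχ
  by_cases hu0 : u = 0
  · subst hu0
    exact absurd (Finset.sum_eq_zero fun j _ => MulChar.map_zero (χ ^ j)) hu
  obtain ⟨v, rfl⟩ := (Ne.isUnit hu0)
  simp only [MulChar.pow_apply_coe] at hu
  by_contra h1
  apply hu
  have h4 : (χ (v : F)) ^ 4 = 1 := by
    rw [← MulChar.pow_apply_coe, ← hχ, pow_orderOf_eq_one, MulChar.one_apply_coe]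
  have := geom_sum_mul (χ (v : F)) 4
  rw [h4, sub_self] at this
  exact (mul_eq_zero.1 this).resolve_right (sub_ne_zero.2 h1)

lemma norm_char_le {F : Type*} [Field F] [Fintype F] (χ : MulChar F ℂ) (u : F) :
    ‖χ u‖ ≤ 1 := by
  by_cases hu0 : u = 0
  · subst hu0
    rw [MulChar.map_zero, norm_zero]
    exact zero_le_one
  have h : χ u * star (χ u) = 1 := by
    rw [MulChar.star_apply', ← MulChar.mul_apply, mul_inv_cancel, MulChar.one_apply (Ne.isUnit hu0)]
  have h2 : ‖χ u‖ * ‖χ u‖ = 1 := by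
    have := congrArg norm h
    simpa using this
  nlinarith [norm_nonneg (χ u)]

lemma norm_jacobi {p : ℕ} [Fact p.Prime] (χ φ : MulChar (ZMod p) ℂ) (hχ : χ ≠ 1) (hφ : φ ≠ 1)
    (h : χ * φ ≠ 1) : ‖jacobiSum χ φ‖ ≤ √(p : ℝ) := by
  have hr : ringChar ℂ ≠ ringChar (ZMod p) := by
    rw [ringChar.eq_zero, ZMod.ringChar_zmod_n]
    exact (Fact.out : p.Prime).ne_zero.symm
  have h1 := jacobiSum_mul_jacobiSum_inv hr hχ hφ h
  have h2 : jacobiSum χ⁻¹ φ⁻¹ = star (jacobiSum χ φ) := by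
    unfold jacobiSum
    rw [star_sum]
    refine Finset.sum_congr rfl fun x _ => ?_
    rw [star_mul', MulChar.star_apply', MulChar.star_apply']
  rw [h2] at h1
  have h3 := congrArg norm h1
  rw [norm_mul, norm_star, ZMod.card, Complex.norm_natCast] at h3
  apply Real.le_sqrt_of_sq_le
  rw [sq, h3]

lemma norm_jacobi_pow {p : ℕ} [Fact p.Prime] (χ : MulChar (ZMod p) ℂ) (hχ : orderOf χ = 4)
    (j k : ℕ) (hj : j < 4) (hk : k < 4) (h0 : ¬ (j = 0 ∧ k = 0)) :
    ‖jacobiSum (χ ^ j) (χ ^ k)‖ ≤ if j = 0 ∨ k = 0 ∨ j + k = 4 then 1 else √(p : ℝ) := by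
  have hne : ∀ n : ℕ, ¬ 4 ∣ n → χ ^ n ≠ 1 := by
    intro n hn h
    exact hn (hχ ▸ orderOf_dvd_of_pow_eq_one h)
  split_ifs with hc
  · rcases hc with rfl | rfl | hc
    · rw [pow_zero, jacobiSum_one_nontrivial (hne k (by omega))]
      simp
    · rw [pow_zero, jacobiSum_comm, jacobiSum_one_nontrivial (hne j (by omega))]
      simp
    · by_cases hj0 : j = 0
      · omega
      have hi : χ ^ k = (χ ^ j)⁻¹ := by
        rw [eq_inv_iff_mul_eq_one, ← pow_add, add_comm, hc, ← hχ, pow_orderOf_eq_one]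
      rw [hi, jacobiSum_nontrivial_inv (hne j (by omega)), norm_neg]
      exact norm_char_le _ _
  · refine norm_jacobi _ _ (hne _ (by omega)) (hne _ (by omega)) ?_
    rw [← pow_add]
    exact hne _ (by omega)

lemma rep_one {p : ℕ} [Fact p.Prime] (hp : p % 4 = 1) (hp61 : 61 ≤ p) (a b : ZMod p)
    (ha : a ≠ 0) (hb : b ≠ 0) : ∃ x y : ZMod p, a * x ^ 4 + b * y ^ 4 = 1 := by
  obtain ⟨χ, hχ⟩ := MulChar.exists_mulChar_orderOf (ZMod p) (n := 4) (R := ℂ)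
    (by rw [ZMod.card]; omega) (Complex.isPrimitiveRoot_exp 4 (by norm_num))
  by_contra hno
  have hz : ∀ u : ZMod p, (∑ j ∈ Finset.range 4, (χ ^ j) (a⁻¹ * u)) *
      (∑ k ∈ Finset.range 4, (χ ^ k) (b⁻¹ * (1 - u))) = 0 := by
    intro u
    by_contra h
    obtain ⟨h1, h2⟩ := mul_ne_zero_iff.1 h
    obtain ⟨x, hx⟩ := fourth_of_sum_ne χ hχ _ h1
    obtain ⟨y, hy⟩ := fourth_of_sum_ne χ hχ _ h2
    refine hno ⟨x, y, ?_⟩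
    rw [← hx, ← hy, mul_inv_cancel_left₀ ha, mul_inv_cancel_left₀ hb]
    ring
  let T : ℕ × ℕ → ℂ := fun q =>
    (χ ^ q.1) a⁻¹ * (χ ^ q.2) b⁻¹ * jacobiSum (χ ^ q.1) (χ ^ q.2)
  have hsum : ∑ q ∈ Finset.range 4 ×ˢ Finset.range 4, T q = 0 := by
    rw [← Finset.sum_eq_zero (s := (Finset.univ : Finset (ZMod p))) (fun u _ => hz u)]
    simp only [Finset.sum_mul_sum, ← Finset.sum_product']
    conv_rhs => rw [Finset.sum_product_right]
    refine Finset.sum_congr rfl fun q _ => ?_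
    simp only [T, jacobiSum, Finset.mul_sum]
    refine Finset.sum_congr rfl fun u _ => ?_
    rw [map_mul, map_mul]
    ring
  have hmem : ((0, 0) : ℕ × ℕ) ∈ Finset.range 4 ×ˢ Finset.range 4 := by simp
  rw [← Finset.add_sum_erase _ _ hmem] at hsum
  have hT0 : T (0, 0) = ((p : ℝ) - 2 : ℝ) := by
    simp only [T, pow_zero]
    rw [jacobiSum_one_one, MulChar.one_apply (inv_ne_zero ha).isUnit,
      MulChar.one_apply (inv_ne_zero hb).isUnit, ZMod.card]
    push_cast
    ring
  let B : ℕ × ℕ → ℝ := fun q => if q.1 = 0 ∨ q.2 = 0 ∨ q.1 + q.2 = 4 then 1 else √(p : ℝ)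
  have hbound : ‖∑ q ∈ (Finset.range 4 ×ˢ Finset.range 4).erase (0, 0), T q‖ ≤
      ∑ q ∈ (Finset.range 4 ×ˢ Finset.range 4).erase (0, 0), B q := by
    refine norm_sum_le_of_le _ ?_
    rintro ⟨j, k⟩ hq
    simp only [Finset.mem_erase, Finset.mem_product, Finset.mem_range, ne_eq, Prod.mk.injEq] at hq
    refine le_trans ?_ (norm_jacobi_pow χ hχ j k hq.2.1 hq.2.2 hq.1)
    simp only [T, norm_mul]
    have h1 := norm_char_le (χ ^ j) a⁻¹
    have h2 := norm_char_le (χ ^ k) b⁻¹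
    exact mul_le_of_le_one_left (norm_nonneg _) (mul_le_one₀ h1 (norm_nonneg _) h2)
  have hB : B (0, 0) + ∑ q ∈ (Finset.range 4 ×ˢ Finset.range 4).erase (0, 0), B q =
      10 + 6 * √(p : ℝ) := by
    rw [Finset.add_sum_erase _ _ hmem, Finset.sum_product]
    simp [Finset.sum_range_succ, B]
    ring
  have hB0 : B (0, 0) = 1 := by simp [B]
  have hp' : (61 : ℝ) ≤ p := by exact_mod_cast hp61
  have hn : ‖T (0, 0)‖ = (p : ℝ) - 2 := by
    rw [hT0, Complex.norm_real, Real.norm_of_nonneg (by linarith)]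
  rw [← neg_eq_of_add_eq_zero_right hsum, norm_neg, hn] at hbound
  have hs := Real.sq_sqrt (show (0 : ℝ) ≤ p by linarith)
  have hs0 := Real.sqrt_nonneg (p : ℝ)
  have hs1 : (7.75 : ℝ) ≤ √(p : ℝ) := Real.le_sqrt_of_sq_le (by norm_num; linarith)
  nlinarith

lemma rep_three {p : ℕ} [Fact p.Prime] (hp : p % 4 = 3) (a b r : ZMod p)
    (ha : a ≠ 0) (hb : b ≠ 0) : ∃ x y : ZMod p, a * x ^ 4 + b * y ^ 4 = r := by
  have hsq : ∀ x : ZMod p, ∃ y : ZMod p, x ^ 2 = y ^ 4 := by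
    intro x
    have hm : ¬ IsSquare (-1 : ZMod p) := by
      rw [ZMod.exists_sq_eq_neg_one_iff]
      omega
    by_cases hx : IsSquare x
    · obtain ⟨y, rfl⟩ := hx
      exact ⟨y, by ring⟩
    · have : IsSquare (-1 * x) := by
        have hx0 : x ≠ 0 := by
          rintro rfl
          exact hx ⟨0, by simp⟩
        rw [← quadraticChar_neg_one_iff_not_isSquare] at hm hx
        rw [← quadraticChar_one_iff_isSquare (mul_ne_zero (neg_ne_zero.2 one_ne_zero) hx0),
          map_mul, hm, hx]
        norm_num
      obtain ⟨y, hy⟩ := this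
      exact ⟨y, by linear_combination (y * y - x) * hy⟩
  obtain ⟨x, y, hxy⟩ := FiniteField.exists_root_sum_quadratic
    (f := Polynomial.C a * Polynomial.X ^ 2 + Polynomial.C 0 * Polynomial.X + Polynomial.C 0)
    (g := Polynomial.C b * Polynomial.X ^ 2 + Polynomial.C 0 * Polynomial.X + Polynomial.C (-r))
    (Polynomial.degree_quadratic ha) (Polynomial.degree_quadratic hb)
    (by rw [ZMod.card]; omega)
  obtain ⟨x', hx⟩ := hsq x
  obtain ⟨y', hy⟩ := hsq y
  refine ⟨x', y', ?_⟩
  rw [← hx, ← hy]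
  simp at hxy
  linear_combination hxy

lemma rep_all {p : ℕ} [Fact p.Prime] (h2 : p ≠ 2) (h : p % 4 = 3 ∨ 61 ≤ p) (a b r : ZMod p)
    (ha : a ≠ 0) (hb : b ≠ 0) : ∃ x y : ZMod p, a * x ^ 4 + b * y ^ 4 = r := by
  have hodd := (Fact.out : p.Prime).eq_two_or_odd.resolve_left h2
  by_cases h3 : p % 4 = 3
  · exact rep_three h3 a b r ha hb
  by_cases hr : r = 0
  · exact ⟨0, 0, by simp [hr]⟩
  obtain ⟨x, y, hxy⟩ := rep_one (p := p) (by omega) (by omega) (a * r⁻¹) (b * r⁻¹)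
    (mul_ne_zero ha (inv_ne_zero hr)) (mul_ne_zero hb (inv_ne_zero hr))
  refine ⟨x, y, ?_⟩
  field_simp at hxy
  exact hxy

/-- Passing from `ZMod p` to integer congruences. -/
lemma rep_int {p : ℕ} [NeZero p] (a b r : ℤ)
    (h : ∃ x y : ZMod p, (a : ZMod p) * x ^ 4 + b * y ^ 4 = r) :
    ∃ x y : ℤ, a * x ^ 4 + b * y ^ 4 ≡ r [ZMOD (p : ℤ)] := by
  obtain ⟨x, y, hxy⟩ := h
  refine ⟨x.val, y.val, ?_⟩
  rw [← ZMod.intCast_eq_intCast_iff]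
  push_cast
  simpa using hxy

/-- A finite check that a form represents all residues. -/
lemma rep_small (p a b : ℕ) (A B : ℤ) (hp : 0 < p) (hA : A ≡ a [ZMOD (p : ℤ)])
    (hB : B ≡ b [ZMOD (p : ℤ)])
    (h : ∀ r < p, ∃ x < p, ∃ y < p, (a * x ^ 4 + b * y ^ 4) % p = r) (r : ℤ) :
    ∃ x y : ℤ, A * x ^ 4 + B * y ^ 4 ≡ r [ZMOD (p : ℤ)] := by
  have hp' : (0 : ℤ) < p := by exact_mod_cast hp
  have h0 := Int.emod_nonneg r hp'.ne'
  have h1 := Int.emod_lt_of_pos r hp'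
  obtain ⟨x, _, y, _, hxy⟩ := h (r % p).toNat (by omega)
  refine ⟨x, y, ((hA.mul_right _).add (hB.mul_right _)).trans ?_⟩
  have h2 : (((a * x ^ 4 + b * y ^ 4) % p : ℕ) : ℤ) = r % p := by rw [hxy]; omega
  rw [Int.ModEq, ← h2]
  push_cast
  rfl

lemma rep_final (p : ℕ) (hp : p.Prime) (h2 : p ≠ 2) (h5 : p ≠ 5) (h13 : p ≠ 13)
    (h17 : p ≠ 17) (r : ℤ) :
    (∃ x y : ℤ, 1 * x ^ 4 + (-1) * y ^ 4 ≡ r [ZMOD (p : ℤ)]) ∧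
      (∃ x y : ℤ, 4 * x ^ 4 + (-2) * y ^ 4 ≡ r [ZMOD (p : ℤ)]) ∧
      (∃ x y : ℤ, 1 * x ^ 4 + 4 * y ^ 4 ≡ r [ZMOD (p : ℤ)]) ∧
      (∃ x y : ℤ, 1 * x ^ 4 + 2 * y ^ 4 ≡ r [ZMOD (p : ℤ)]) := by
  have : Fact p.Prime := ⟨hp⟩
  have : NeZero p := ⟨hp.ne_zero⟩
  by_cases hc : p % 4 = 3 ∨ 61 ≤ p
  · have hz2 : (2 : ZMod p) ≠ 0 := by
      intro h
      have h' : ((2 : ℕ) : ZMod p) = 0 := by exact_mod_cast h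
      rw [ZMod.natCast_eq_zero_iff] at h'
      exact h2 ((Nat.prime_dvd_prime_iff_eq hp Nat.prime_two).1 h')
    have hz4 : (4 : ZMod p) ≠ 0 := by
      have : (4 : ZMod p) = 2 * 2 := by norm_num
      rw [this]
      exact mul_ne_zero hz2 hz2
    refine ⟨rep_int _ _ _ (rep_all h2 hc _ _ _ ?_ ?_), rep_int _ _ _ (rep_all h2 hc _ _ _ ?_ ?_),
      rep_int _ _ _ (rep_all h2 hc _ _ _ ?_ ?_), rep_int _ _ _ (rep_all h2 hc _ _ _ ?_ ?_)⟩ <;>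
    push_cast <;> first | exact one_ne_zero | exact hz2 | exact hz4 |
      exact neg_ne_zero.2 one_ne_zero | exact neg_ne_zero.2 hz2
  · have hs : p = 29 ∨ p = 37 ∨ p = 41 ∨ p = 53 := by
      have hlt : p < 61 := by omega
      have hm : p % 4 ≠ 3 := by omega
      clear hc
      interval_cases p <;> first | omega | (exfalso; revert hp; norm_num)
    rcases hs with rfl | rfl | rfl | rfl
    · exact ⟨rep_small 29 1 28 1 (-1) (by decide) (by decide) (by decide) (by decide +kernel) r,
        rep_small 29 4 27 4 (-2) (by decide) (by decide) (by decide) (by decide +kernel) r,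
        rep_small 29 1 4 1 4 (by decide) (by decide) (by decide) (by decide +kernel) r,
        rep_small 29 1 2 1 2 (by decide) (by decide) (by decide) (by decide +kernel) r⟩
    · exact ⟨rep_small 37 1 36 1 (-1) (by decide) (by decide) (by decide) (by decide +kernel) r,
        rep_small 37 4 35 4 (-2) (by decide) (by decide) (by decide) (by decide +kernel) r,
        rep_small 37 1 4 1 4 (by decide) (by decide) (by decide) (by decide +kernel) r,
        rep_small 37 1 2 1 2 (by decide) (by decide) (by decide) (by decide +kernel) r⟩
    · exact ⟨rep_small 41 1 40 1 (-1) (by decide) (by decide) (by decide) (by decide +kernel) r,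
        rep_small 41 4 39 4 (-2) (by decide) (by decide) (by decide) (by decide +kernel) r,
        rep_small 41 1 4 1 4 (by decide) (by decide) (by decide) (by decide +kernel) r,
        rep_small 41 1 2 1 2 (by decide) (by decide) (by decide) (by decide +kernel) r⟩
    · exact ⟨rep_small 53 1 52 1 (-1) (by decide) (by decide) (by decide) (by decide +kernel) r,
        rep_small 53 4 51 4 (-2) (by decide) (by decide) (by decide) (by decide +kernel) r,
        rep_small 53 1 4 1 4 (by decide) (by decide) (by decide) (by decide +kernel) r,
        rep_small 53 1 2 1 2 (by decide) (by decide) (by decide) (by decide +kernel) r⟩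


/-- If `p` is a prime different from `2, 5, 13, 17`, then each of the quartic forms
`x⁴ - z⁴`, `4w⁴ - 2y⁴`, `z⁴ + 4w⁴`, `x⁴ + 2y⁴` represents every residue class modulo `p`. -/
theorem stmt_17 (p : ℕ) (hp : p.Prime) (h2 : p ≠ 2) (h5 : p ≠ 5) (h13 : p ≠ 13)
    (h17 : p ≠ 17) (r : ℤ) :
    (∃ x z : ℤ, x ^ 4 - z ^ 4 ≡ r [ZMOD (p : ℤ)]) ∧
      (∃ y w : ℤ, 4 * w ^ 4 - 2 * y ^ 4 ≡ r [ZMOD (p : ℤ)]) ∧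
      (∃ z w : ℤ, z ^ 4 + 4 * w ^ 4 ≡ r [ZMOD (p : ℤ)]) ∧
      (∃ x y : ℤ, x ^ 4 + 2 * y ^ 4 ≡ r [ZMOD (p : ℤ)]) := by
  obtain ⟨⟨a, b, h⟩, ⟨c, d, h'⟩, ⟨e, f, h''⟩, ⟨g, k, h'''⟩⟩ := rep_final p hp h2 h5 h13 h17 r
  refine ⟨⟨a, b, ?_⟩, ⟨d, c, ?_⟩, ⟨e, f, ?_⟩, ⟨g, k, ?_⟩⟩
  · convert h using 1; ring
  · convert h' using 1; ring
  · convert h'' using 1; ring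
  · convert h''' using 1; ring
end
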